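/- Assume the fixed subterm deduction system contains a composition rule x₁, x₂ → f(x₁,x₂) where f is a function symbol of arity 2 that does not occur in any other rule of the system. A constraint system S is satisfiable (i.e., admits a solution) if and only if there exists a solution σ' of S whose size is polynomial in |Sub(S)|. -/

import Mathlib

/-! ### Terms -/

/-- First-order terms: variables, ordinary constants, nonces (an infinite
subset of the constants), and function applications. -/
inductive Term : Type
  | var : ℕ → Term
  | cst : ℕ → Term
  | nonce : ℕ → Term
  | func : ℕ → List Term → Term

namespace Term

/-- The subterm relation. -/
inductive IsSubterm : Term → Term → Prop
  | refl (t : Term) : IsSubterm t t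
  | func {s t : Term} {f : ℕ} {args : List Term} :
      t ∈ args → IsSubterm s t → IsSubterm s (func f args)

/-- The set of subterms of a term. -/
def sub (t : Term) : Set Term := {s | IsSubterm s t}

/-- The set of (indices of) variables of a term. -/
def varsSet (t : Term) : Set ℕ := {x | IsSubterm (var x) t}

/-- A term is ground if it has no variables. -/
def Ground (t : Term) : Prop := varsSet t = ∅

/-- The term is a variable. -/
def IsVar : Term → Prop
  | var _ => True
  | _ => False

/-- Application of a substitution to a term. -/
noncomputable def subst (σ : ℕ → Term) : Term → Term
  | var x => σ x
  | cst c => cst c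
  | nonce n => nonce n
  | func f args => func f (args.attach.map (fun a => Term.subst σ a.1))
decreasing_by
  have := List.sizeOf_lt_of_mem a.2
  simp only [Term.func.sizeOf_spec]
  omega

/-- The function symbol `f` occurs in the term `t`. -/
def OccursFun (f : ℕ) (t : Term) : Prop := ∃ args, IsSubterm (func f args) t

end Term

/-! ### Substitutions -/

/-- Substitutions (maps from variables to terms). -/
abbrev Subst := ℕ → Term

namespace Subst

/-- The domain of a substitution. -/
def dom (σ : Subst) : Set ℕ := {x | σ x ≠ .var x}

/-- The image of a substitution. -/
def img (σ : Subst) : Set Term := {t | ∃ x ∈ dom σ, σ x = t}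

/-- Idempotency of a substitution. -/
def Idem (σ : Subst) : Prop := ∀ x, (σ x).subst σ = σ x

/-- A substitution is ground if its image consists of ground terms. -/
def IsGround (σ : Subst) : Prop := ∀ x ∈ dom σ, (σ x).Ground

open Classical in
/-- Union of two substitutions (intended for disjoint domains). -/
noncomputable def union (σ τ : Subst) : Subst := fun x =>
  if σ x = Term.var x then τ x else σ x

end Subst

/-- Subterms of a set of terms. -/
def subT (T : Set Term) : Set Term := {s | ∃ t ∈ T, Term.IsSubterm s t}

/-- Variables of a set of terms. -/
def varsT (T : Set Term) : Set ℕ := {x | ∃ t ∈ T, Term.IsSubterm (.var x) t}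

/-- DAG size of a set of terms: number of its subterms. -/
noncomputable def sizeT (T : Set Term) : ℕ := (subT T).ncard

/-- Size of a substitution: DAG size of its image. -/
noncomputable def sizeSubst (σ : Subst) : ℕ := sizeT σ.img

/-! ### Deduction systems, steps and derivations -/

/-- A deduction system: a finite set of (standard) deduction rules, each rule
being a pair (left-hand sides, right-hand side) whose right-hand-side variables
occur in the left-hand sides.  Nonce-creation rules and reception rules are
built into the notions of steps/derivations below. -/
structure DeductionSystem where
  rules : Set (List Term × Term)
  finite : rules.Finite
  wf : ∀ p ∈ rules, p.2.varsSet ⊆ varsT {u | u ∈ p.1}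

/-- A step of a derivation: a reception `? → t` or a standard deduction `l → r`
(nonce creations are standard deductions with empty left-hand side). -/
inductive Step
  | recv : Term → Step
  | std : List Term → Term → Step

namespace Step

/-- Right-hand side of a step. -/
def rhs : Step → Term
  | recv t => t
  | std _ r => r

/-- All terms occurring in the step. -/
def terms : Step → Set Term
  | recv t => {t}
  | std l r => {r} ∪ {u | u ∈ l}

end Step

/-- The set of right-hand sides of the first `k` steps of `D`. -/
def RHSset (D : List Step) (k : ℕ) : Set Term :=
  {r | ∃ j < k, ∃ s, D[j]? = some s ∧ s.rhs = r}

/-- A step is a deduction of the system `DS`: a reception of a ground term, a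
nonce creation, or a ground instance of a (standard) rule of `DS`. -/
def IsDeduction (DS : DeductionSystem) (s : Step) : Prop :=
  match s with
  | .recv t => t.Ground
  | .std l r =>
      (∀ u ∈ l, u.Ground) ∧ r.Ground ∧
        ((l = [] ∧ ∃ n, r = Term.nonce n) ∨
          ∃ p ∈ DS.rules, ∃ σ : Subst,
            l = p.1.map (Term.subst σ) ∧ r = p.2.subst σ)

/-- A derivation: a sequence of deductions in which the left-hand side of every
standard step has already been deduced. -/
def IsDerivation (DS : DeductionSystem) (D : List Step) : Prop :=
  (∀ s ∈ D, IsDeduction DS s) ∧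
  ∀ (i : ℕ) (l : List Term) (r : Term), D[i]? = some (Step.std l r) → ∀ u ∈ l, u ∈ RHSset D i

/-- The position of the first reception of `D` at index `≥ k` (or `|D|` if
there is none): (0-indexed version of) `Next(D, ·)`. -/
noncomputable def nextRecv (D : List Step) (k : ℕ) : ℕ :=
  sInf ({D.length} ∪ {j | k ≤ j ∧ ∃ t, D[j]? = some (Step.recv t)})

/-- `Der DS K`: the set of ground terms derivable from the knowledge `K`. -/
def Der (DS : DeductionSystem) (K : Set Term) : Set Term :=
  {t | ∃ D : List Step, IsDerivation DS D ∧
        (∀ (j : ℕ) (u : Term), D[j]? = some (Step.recv u) → u ∈ K) ∧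
        ∃ l, D.getLast? = some (Step.std l t)}

/-- No term is deduced twice in `D` by a standard rule. -/
def NoDuplicateStd (D : List Step) : Prop :=
  ∀ (i j : ℕ) (li lj : List Term) (r : Term), D[i]? = some (Step.std li r) → D[j]? = some (Step.std lj r) → i = j

/-- `(T,σ)`-maximality of a derivation. -/
def MaximalDeriv (DS : DeductionSystem) (T : Set Term) (σ : Subst) (D : List Step) : Prop :=
  ∀ t ∈ subT T, ∀ k ≤ D.length,
    t.subst σ ∈ Der DS (RHSset D k) → t.subst σ ∈ RHSset D (nextRecv D k)

/-! ### Constraint systems -/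

/-- A constraint: a reception `?t`, an emission `!t` or a negative
constraint `♮t`. -/
inductive Constraint
  | recv : Term → Constraint
  | send : Term → Constraint
  | neg : Term → Constraint

namespace Constraint

/-- The term of a constraint. -/
def term : Constraint → Term
  | recv t => t
  | send t => t
  | neg t => t

/-- The constraint is a send constraint. -/
def isSend : Constraint → Bool
  | send _ => true
  | _ => false

/-- Apply a substitution to a constraint. -/
noncomputable def map (θ : Subst) : Constraint → Constraint
  | recv t => recv (t.subst θ)
  | send t => send (t.subst θ)
  | neg t => neg (t.subst θ)

end Constraint

/-- A (pre-)constraint system is a finite sequence of constraints. -/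
abbrev CSystem := List Constraint

/-- The terms of a constraint system. -/
def csTerms (S : CSystem) : Set Term := {t | ∃ c ∈ S, c.term = t}

/-- `Sub(S)`. -/
def csSub (S : CSystem) : Set Term := subT (csTerms S)

/-- `vars(S)`. -/
def csVars (S : CSystem) : Set ℕ := varsT (csTerms S)

/-- `|Sub(S)|`. -/
noncomputable def csSize (S : CSystem) : ℕ := sizeT (csTerms S)

/-- Apply a substitution to all constraints of a system. -/
noncomputable def csSubst (S : CSystem) (θ : Subst) : CSystem := S.map (Constraint.map θ)

/-- Origination and determination: `S` is a genuine constraint system. -/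
def IsCS (S : CSystem) : Prop :=
  (∀ (i : ℕ) (t : Term), S[i]? = some (Constraint.send t) →
      t.varsSet ⊆ {x | ∃ j < i, ∃ u : Term, S[j]? = some (Constraint.recv u) ∧ x ∈ u.varsSet}) ∧
  (∀ (i : ℕ) (t : Term), S[i]? = some (Constraint.neg t) →
      t.varsSet ⊆ {x | ∃ (j : ℕ) (u : Term), S[j]? = some (Constraint.recv u) ∧ x ∈ u.varsSet})

/-- The knowledge produced by the send constraints up to (and including) index
`i`, instantiated by `σ` (this is `{tⱼσ : j ≤ prev(i), S[j] = !tⱼ}`). -/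
def knowledge (S : CSystem) (σ : Subst) (i : ℕ) : Set Term :=
  {u | ∃ j ≤ i, ∃ t, S[j]? = some (Constraint.send t) ∧ u = t.subst σ}

/-- A solution of a constraint system. -/
structure IsSolution (DS : DeductionSystem) (S : CSystem) (σ : Subst) : Prop where
  ground : σ.IsGround
  idem : σ.Idem
  dom_eq : σ.dom = csVars S
  recv_mem : ∀ (i : ℕ) (t : Term), S[i]? = some (Constraint.recv t) → t.subst σ ∈ Der DS (knowledge S σ i)
  neg_not_mem : ∀ (i : ℕ) (t : Term), S[i]? = some (Constraint.neg t) → t.subst σ ∉ Der DS (knowledge S σ i)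

/-- `prev(i)`: the last send index `≤ i` of `S`, if any. -/
def prevSend (S : CSystem) (i : ℕ) : Option ℕ :=
  ((List.range (i + 1)).filter (fun j => ((S[j]?).map Constraint.isSend).getD false)).max?

/-- `(S,σ)`-compliance of a derivation `D` with the mapping `α`: `α` is a
strictly increasing bijection from the send indices of `S` onto the reception
positions of `D`, sending `!t` to the reception `? → tσ`. -/
structure Compliant (S : CSystem) (σ : Subst) (D : List Step) (α : ℕ → ℕ) : Prop where
  mono : ∀ (i j : ℕ) (ti tj : Term), S[i]? = some (Constraint.send ti) →
    S[j]? = some (Constraint.send tj) → i < j → α i < α j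
  maps : ∀ (i : ℕ) (t : Term), S[i]? = some (Constraint.send t) →
    D[α i]? = some (Step.recv (t.subst σ))
  surj : ∀ (j : ℕ) (u : Term), D[j]? = some (Step.recv u) →
    ∃ i t, S[i]? = some (Constraint.send t) ∧ α i = j

/-- Position in `D` of the first reception strictly after the reception
corresponding (via `α`) to the last send constraint `≤ i` of `S` (or the first
reception of `D` if there is no such send): this is `Next(D, α(prev(i)))`. -/
noncomputable def cutoff (S : CSystem) (D : List Step) (α : ℕ → ℕ) (i : ℕ) : ℕ :=
  match prevSend S i with
  | none => nextRecv D 0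
  | some p => nextRecv D (α p + 1)

/-- `D, σ, α ⊢ S`: the derivation `D` is a proof of `σ ⊨ S`. -/
structure IsProof (DS : DeductionSystem) (S : CSystem) (σ : Subst)
    (D : List Step) (α : ℕ → ℕ) : Prop where
  deriv : IsDerivation DS D
  compliant : Compliant S σ D α
  recv_proved : ∀ (i : ℕ) (t : Term), S[i]? = some (Constraint.recv t) →
    ∃ j < cutoff S D α i, ∃ s, D[j]? = some s ∧ s.rhs = t.subst σ
  neg_not_mem : ∀ (i : ℕ) (t : Term), S[i]? = some (Constraint.neg t) →
    t.subst σ ∉ Der DS (knowledge S σ i)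

/-! ### Subterm deduction systems -/

/-- A composition rule: `x₁,…,xₙ → f(x₁,…,xₙ)` with pairwise distinct
variables `xᵢ`. -/
def IsCompRule (p : List Term × Term) : Prop :=
  ∃ (f : ℕ) (xs : List ℕ), xs.Nodup ∧ p.1 = xs.map Term.var ∧
    p.2 = Term.func f (xs.map Term.var)

/-- A decomposition rule: the right-hand side is a subterm of a left-hand
side. -/
def IsDecompRule (p : List Term × Term) : Prop :=
  ∃ l ∈ p.1, p.2 ∈ l.sub

/-- A subterm deduction system: every standard rule is a composition or a
decomposition rule. -/
def SubtermSystem (DS : DeductionSystem) : Prop :=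
  ∀ p ∈ DS.rules, IsCompRule p ∨ IsDecompRule p

/-- A step is a composition: a reception, a nonce creation, or an instance of
a composition rule of `DS`. -/
def IsCompositionStep (DS : DeductionSystem) (s : Step) : Prop :=
  match s with
  | .recv _ => True
  | .std l r =>
      (l = [] ∧ ∃ n, r = Term.nonce n) ∨
        ∃ p ∈ DS.rules, IsCompRule p ∧
          ∃ σ : Subst, l = p.1.map (Term.subst σ) ∧ r = p.2.subst σ

/-- `l → r` is an instance (not necessarily ground) of a standard deduction
rule of the system. -/
def StdRuleInstance (DS : DeductionSystem) (l : List Term) (r : Term) : Prop :=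
  (l = [] ∧ ∃ n, r = Term.nonce n) ∨
    ∃ p ∈ DS.rules, ∃ σ : Subst, l = p.1.map (Term.subst σ) ∧ r = p.2.subst σ

/-- DAG size of a rule. -/
noncomputable def ruleSize (p : List Term × Term) : ℕ :=
  sizeT ({p.2} ∪ {u | u ∈ p.1})

/-- Maximal size of a decomposition rule of the system. -/
noncomputable def maxDecompSize (DS : DeductionSystem) : ℕ :=
  sSup {n | ∃ p ∈ DS.rules, IsDecompRule p ∧ ruleSize p = n}

/-! ### Localization -/

/-- `T` localizes the derivation `D` for `σ`. -/
def Localizes (DS : DeductionSystem) (T : Set Term) (σ : Subst) (D : List Step) : Prop :=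
  ∀ (i : ℕ) (l : List Term) (r : Term), D[i]? = some (Step.std l r) →
    ∀ t ∈ subT T, ¬ t.IsVar → t.subst σ = r →
      ∃ ts : List Term, (∀ u ∈ ts, u ∈ subT T) ∧
        (∀ u ∈ ts, u.subst σ ∈ RHSset D i) ∧ StdRuleInstance DS ts t

/-- `T` one-to-one localizes `D` for `σ`. -/
def OneToOneLocalizes (DS : DeductionSystem) (T : Set Term) (σ : Subst)
    (D : List Step) : Prop :=
  Localizes DS T σ D ∧ Set.InjOn (Term.subst σ) (subT T)

/-! ### Terms of a derivation, `Out(S)` -/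

/-- The terms occurring in a derivation. -/
def derTerms (D : List Step) : Set Term := {t | ∃ s ∈ D, t ∈ s.terms}

/-- `Sub(D)`. -/
def subD (D : List Step) : Set Term := subT (derTerms D)

/-- The terms of the send constraints of `S`. -/
def outTerms (S : CSystem) : Set Term := {t | Constraint.send t ∈ S}

/-! ### Milestone sequences -/

/-- An element of a milestone sequence: `→ t` or `? → t`. -/
inductive MStep
  | ded : Term → MStep
  | recvm : Term → MStep

/-- The term of a milestone element. -/
def MStep.term : MStep → Term
  | ded t => t
  | recvm t => t

/-- `M` is a milestone candidate sequence of `D` for `(T,σ)`. -/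
def IsMilestoneOf (T : Set Term) (σ : Subst) (D : List Step) (M : List MStep) : Prop :=
  (∀ m ∈ M, m.term ∈ subT T) ∧
  ∃ α : ℕ → ℕ, (∀ i j, i < j → j < M.length → α i < α j) ∧
    ∀ (i : ℕ) (m : MStep), M[i]? = some m →
      match m with
      | MStep.recvm t => D[α i]? = some (Step.recv (t.subst σ))
      | MStep.ded t => ∃ l, D[α i]? = some (Step.std l (t.subst σ))

/-- `M` is the `(T,σ)`-milestone sequence of `D`: a candidate of maximal
length. -/
def IsMilestoneSeq (T : Set Term) (σ : Subst) (D : List Step) (M : List MStep) : Prop :=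
  IsMilestoneOf T σ D M ∧ ∀ M', IsMilestoneOf T σ D M' → M'.length ≤ M.length

/-! ### Free pairing symbol -/

/-- `f` occurs in the rule `p`. -/
def OccursInRule (f : ℕ) (p : List Term × Term) : Prop :=
  (∃ t ∈ p.1, t.OccursFun f) ∨ p.2.OccursFun f

/-- The system contains a composition rule `x₁, x₂ → f(x₁,x₂)` where the
binary symbol `f` occurs in no other rule. -/
def FreePairing (DS : DeductionSystem) : Prop :=
  ∃ (f x₁ x₂ : ℕ), x₁ ≠ x₂ ∧
    ([Term.var x₁, Term.var x₂], Term.func f [Term.var x₁, Term.var x₂]) ∈ DS.rules ∧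
    ∀ p ∈ DS.rules, OccursInRule f p →
      p = ([Term.var x₁, Term.var x₂], Term.func f [Term.var x₁, Term.var x₂])

/-! ### Unification -/

/-- `σ` is a unifier of the unification system `U`. -/
def IsUnifier (U : Set (Term × Term)) (σ : Subst) : Prop :=
  ∀ pq ∈ U, Term.subst σ pq.1 = Term.subst σ pq.2

/-- `θ` is a most general unifier of `U`. -/
def IsMGU (U : Set (Term × Term)) (θ : Subst) : Prop :=
  IsUnifier U θ ∧ ∀ σ, IsUnifier U σ → ∃ τ : Subst, ∀ x, σ x = (θ x).subst τ

/-- The terms of a unification system. -/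
def unifTerms (U : Set (Term × Term)) : Set Term :=
  {t | ∃ pq ∈ U, t = pq.1 ∨ t = pq.2}

/-- The variables of a unification system. -/
def unifVars (U : Set (Term × Term)) : Set ℕ := varsT (unifTerms U)

/-!
Given a solution `σ`, follow a first derivation of each instance of a subterm of `S`. The subterms
of `S`, together with the premises of the rules that conclude these derivations, are linearly many
patterns. A derivable instance that is matched by no pattern other than a variable can be replaced
by anything that becomes derivable at the same moment. The pair `f(n, a)` of a fresh nonce `n` and
the last term `a` sent before that moment does: its rule allows building it as soon as `a` is known,
and since `f` occurs in no other rule, replacing the pairs by the original terms turns every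
derivation in the new solution back into one in the old solution. All terms of the new solution are
then images of the instances of patterns, nonces, or images of sent terms.
-/

namespace Term

instance : Nonempty Term := ⟨nonce 0⟩

/-- The immediate subterms of a term. Together with `mapArgs` this treats atoms and applications
uniformly, an atom being a term without arguments. -/
def args : Term → List Term
  | func _ l => l
  | _ => []

/-- The term obtained by applying `g` to each immediate subterm. -/
def mapArgs (g : Term → Term) : Term → Term
  | func f l => func f (l.map g)
  | t => t

variable {a s t u : Term} {g h : Term → Term} {σ τ : Subst}

theorem args_mapArgs (g : Term → Term) (t : Term) : (t.mapArgs g).args = t.args.map g := by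
  cases t <;> rfl

theorem isVar_mapArgs : (t.mapArgs g).IsVar ↔ t.IsVar := by
  cases t <;> rfl

theorem mapArgs_mapArgs (g h : Term → Term) (t : Term) :
    (t.mapArgs h).mapArgs g = t.mapArgs (g ∘ h) := by
  cases t <;> simp [mapArgs]

theorem mapArgs_congr (hgh : ∀ a ∈ t.args, g a = h a) : t.mapArgs g = t.mapArgs h := by
  cases t with
  | func f l => exact congrArg (func f) (List.map_congr_left hgh)
  | _ => rfl

theorem mapArgs_eq_self (hg : ∀ a ∈ t.args, g a = a) : t.mapArgs g = t := by
  rw [mapArgs_congr (h := id) hg]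
  cases t <;> simp [mapArgs]

theorem sizeOf_lt_of_mem_args (ha : a ∈ t.args) : sizeOf a < sizeOf t := by
  cases t with
  | func f l =>
    have : sizeOf a < sizeOf l := List.sizeOf_lt_of_mem ha
    simp only [func.sizeOf_spec]
    omega
  | _ => cases ha

@[elab_as_elim]
theorem args_induction {motive : Term → Prop}
    (step : ∀ t : Term, (∀ a ∈ t.args, motive a) → motive t) (t : Term) : motive t :=
  step t fun a _ => args_induction step a
termination_by t
decreasing_by exact sizeOf_lt_of_mem_args ‹_›

theorem isSubterm_iff : IsSubterm s t ↔ s = t ∨ ∃ a ∈ t.args, IsSubterm s a := by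
  constructor
  · rintro (_ | ⟨ha, hs⟩)
    exacts [.inl rfl, .inr ⟨_, ha, hs⟩]
  · rintro (rfl | ⟨a, ha, hs⟩)
    · exact .refl _
    · cases t with
      | func f l => exact .func ha hs
      | _ => cases ha

theorem IsSubterm.of_mem_args (ha : a ∈ t.args) : IsSubterm a t :=
  isSubterm_iff.2 (.inr ⟨a, ha, .refl a⟩)

theorem mem_of_isSubterm {T : Set Term} (hT : ∀ t ∈ T, ∀ a ∈ t.args, a ∈ T)
    (hst : IsSubterm s t) (ht : t ∈ T) : s ∈ T := by
  induction hst with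
  | refl => exact ht
  | func ha _ ih => exact ih (hT _ ht _ ha)

theorem IsSubterm.trans (hst : IsSubterm s t) (htu : IsSubterm t u) : IsSubterm s u := by
  induction htu with
  | refl => exact hst
  | func ha _ ih => exact .func ha ih

theorem finite_sub (t : Term) : t.sub.Finite := by
  induction t using args_induction with
  | step t ih =>
    have : t.sub = {t} ∪ ⋃ a ∈ {a | a ∈ t.args}, a.sub := by
      ext s
      simpa [sub] using isSubterm_iff
    rw [this]
    exact (Set.finite_singleton t).union ((List.finite_toSet t.args).biUnion ih)

theorem subst_var (σ : Subst) (x : ℕ) : (var x).subst σ = σ x := by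
  rw [subst]

theorem subst_of_not_isVar (σ : Subst) (ht : ¬ t.IsVar) : t.subst σ = t.mapArgs (subst σ) := by
  cases t with
  | var x => exact absurd trivial ht
  | func f l => rw [subst, List.attach_map_val, mapArgs]
  | _ => rw [subst]; rfl

theorem args_subst (σ : Subst) (ht : ¬ t.IsVar) :
    (t.subst σ).args = t.args.map (subst σ) := by
  rw [subst_of_not_isVar σ ht, args_mapArgs]

theorem not_isVar_subst (ht : ¬ t.IsVar) : ¬ (t.subst σ).IsVar := by
  rwa [subst_of_not_isVar σ ht, isVar_mapArgs]

theorem eq_var_of_isVar (ht : t.IsVar) : ∃ x, t = var x := by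
  cases t with
  | var x => exact ⟨x, rfl⟩
  | _ => exact ht.elim

theorem subst_congr (hστ : ∀ x, IsSubterm (var x) t → σ x = τ x) : t.subst σ = t.subst τ := by
  induction t using args_induction with
  | step t ih =>
    by_cases ht : t.IsVar
    · obtain ⟨x, rfl⟩ := eq_var_of_isVar ht
      simpa only [subst_var] using hστ x (.refl _)
    · rw [subst_of_not_isVar σ ht, subst_of_not_isVar τ ht]
      exact mapArgs_congr fun a ha => ih a ha fun x hx => hστ x (hx.trans (.of_mem_args ha))

theorem IsSubterm.subst (σ : Subst) (hst : IsSubterm s t) :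
    IsSubterm (s.subst σ) (t.subst σ) := by
  induction hst with
  | refl => exact .refl _
  | func ha _ ih =>
    refine ih.trans (.of_mem_args ?_)
    rw [args_subst σ id]
    exact List.mem_map_of_mem ha

theorem IsSubterm.apply_var {x : ℕ} (σ : Subst) (hx : IsSubterm (var x) t) :
    IsSubterm (σ x) (t.subst σ) :=
  subst_var σ x ▸ hx.subst σ

theorem isSubterm_subst_cases (hu : IsSubterm u (t.subst σ)) :
    (∃ q, IsSubterm q t ∧ ¬ q.IsVar ∧ q.subst σ = u) ∨
      ∃ x, IsSubterm (var x) t ∧ IsSubterm u (σ x) := by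
  induction t using args_induction with
  | step t ih =>
    by_cases ht : t.IsVar
    · obtain ⟨x, rfl⟩ := eq_var_of_isVar ht
      exact .inr ⟨x, .refl _, subst_var σ x ▸ hu⟩
    · obtain rfl | ⟨b, hb, hub⟩ := isSubterm_iff.1 hu
      · exact .inl ⟨t, .refl t, ht, rfl⟩
      · rw [args_subst σ ht, List.mem_map] at hb
        obtain ⟨a, ha, rfl⟩ := hb
        obtain ⟨q, hq, hqu⟩ | ⟨x, hx, hux⟩ := ih a ha hub
        · exact .inl ⟨q, hq.trans (.of_mem_args ha), hqu⟩
        · exact .inr ⟨x, hx.trans (.of_mem_args ha), hux⟩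

theorem ground_iff : t.Ground ↔ ∀ x, ¬ IsSubterm (var x) t :=
  Set.eq_empty_iff_forall_notMem

theorem not_ground_var (x : ℕ) : ¬ (var x).Ground :=
  fun h => ground_iff.1 h x (.refl _)

theorem Ground.of_isSubterm (ht : t.Ground) (hst : IsSubterm s t) : s.Ground :=
  ground_iff.2 fun x hx => ground_iff.1 ht x (hx.trans hst)

theorem Ground.not_isVar (ht : t.Ground) : ¬ t.IsVar := by
  intro h
  obtain ⟨x, rfl⟩ := eq_var_of_isVar h
  exact not_ground_var x ht

theorem ground_of_args (ht : ¬ t.IsVar) (hargs : ∀ a ∈ t.args, a.Ground) : t.Ground := by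
  rw [ground_iff]
  intro x hx
  obtain rfl | ⟨a, ha, hxa⟩ := isSubterm_iff.1 hx
  exacts [ht trivial, ground_iff.1 (hargs a ha) x hxa]

theorem ground_nonce (n : ℕ) : (nonce n).Ground :=
  ground_of_args id nofun

theorem ground_subst_iff : (t.subst σ).Ground ↔ ∀ x, IsSubterm (var x) t → (σ x).Ground := by
  refine ⟨fun h x hx => h.of_isSubterm (hx.apply_var σ), fun h => ground_iff.2 fun x hx => ?_⟩
  obtain ⟨q, -, hq, hqx⟩ | ⟨y, hy, hxy⟩ := isSubterm_subst_cases hx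
  · exact (hqx ▸ not_isVar_subst hq : ¬ (var x).IsVar) trivial
  · exact ground_iff.1 (h y hy) x hxy

theorem Ground.subst_eq (ht : t.Ground) (σ : Subst) : t.subst σ = t := by
  induction t using args_induction with
  | step t ih =>
    rw [subst_of_not_isVar σ ht.not_isVar]
    exact mapArgs_eq_self fun a ha => ih a ha (ht.of_isSubterm (.of_mem_args ha))

open Classical in
/-- Top-down replacement: every maximal subterm `u ∈ R` of a term is replaced by `g u`. -/
noncomputable def replace (R : Set Term) (g : Term → Term) : Term → Term
  | func f l => if func f l ∈ R then g (func f l) else func f (l.map (replace R g))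
  | t => if t ∈ R then g t else t

variable {R : Set Term}

theorem replace_of_mem (ht : t ∈ R) : t.replace R g = g t := by
  cases t <;> rw [replace] <;> simp [ht]

theorem replace_of_notMem (ht : t ∉ R) : t.replace R g = t.mapArgs (replace R g) := by
  cases t <;> rw [replace] <;> simp [ht, mapArgs]

theorem replace_congr (hgh : ∀ u ∈ R, IsSubterm u t → g u = h u) :
    t.replace R g = t.replace R h := by
  induction t using args_induction with
  | step t ih =>
    by_cases ht : t ∈ R
    · rw [replace_of_mem ht, replace_of_mem ht, hgh t ht (.refl t)]
    · rw [replace_of_notMem ht, replace_of_notMem ht]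
      exact mapArgs_congr fun a ha =>
        ih a ha fun u hu hua => hgh u hu (hua.trans (.of_mem_args ha))

theorem Ground.replace (ht : t.Ground) (hg : ∀ u ∈ R, u.Ground → (g u).Ground) :
    (t.replace R g).Ground := by
  induction t using args_induction with
  | step t ih =>
    by_cases htR : t ∈ R
    · rw [replace_of_mem htR]
      exact hg t htR ht
    · rw [replace_of_notMem htR]
      refine ground_of_args (isVar_mapArgs.not.2 ht.not_isVar) ?_
      rw [args_mapArgs, List.forall_mem_map]
      exact fun a ha => ih a ha (ht.of_isSubterm (.of_mem_args ha))

theorem replace_subst (hR : ∀ q, IsSubterm q t → ¬ q.IsVar → q.subst σ ∉ R) :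
    (t.subst σ).replace R g = t.subst fun x => (σ x).replace R g := by
  induction t using args_induction with
  | step t ih =>
    by_cases ht : t.IsVar
    · obtain ⟨x, rfl⟩ := eq_var_of_isVar ht
      simp only [subst_var]
    · rw [replace_of_notMem (hR t (.refl t) ht), subst_of_not_isVar σ ht, mapArgs_mapArgs,
        subst_of_not_isVar _ ht]
      exact mapArgs_congr fun a ha =>
        ih a ha fun q hq => hR q (hq.trans (.of_mem_args ha))

theorem exists_fresh_nonces {T : Set Term} (hR : R.Finite) (hT : T.Finite) :
    ∃ ν : Term → ℕ, R.InjOn ν ∧ ∀ v, nonce (ν v) ∉ T := by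
  obtain ⟨ν, hν⟩ := Set.countable_iff_exists_injOn.1 hR.countable
  have hnonces : (nonce ⁻¹' T).Finite := hT.preimage fun _ _ _ _ h => nonce.inj h
  obtain ⟨b, hb⟩ := hnonces.bddAbove
  refine ⟨fun v => ν v + (b + 1), fun u hu v hv huv => hν hu hv (Nat.add_right_cancel huv),
    fun v hv => ?_⟩
  have : ν v + (b + 1) ≤ b := hb hv
  omega

end Term

theorem subT_finite {T : Set Term} (hT : T.Finite) : (subT T).Finite := by
  have : subT T = ⋃ t ∈ T, t.sub := by
    ext s
    simp [subT, Term.sub]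
  rw [this]
  exact hT.biUnion fun t _ => t.finite_sub

theorem subset_subT (T : Set Term) : T ⊆ subT T :=
  fun t ht => ⟨t, ht, .refl t⟩

theorem mem_subT_of_isSubterm {T : Set Term} {s t : Term} (ht : t ∈ subT T)
    (hst : Term.IsSubterm s t) : s ∈ subT T := by
  obtain ⟨u, hu, htu⟩ := ht
  exact ⟨u, hu, hst.trans htu⟩

namespace DeductionSystem

variable (DS : DeductionSystem) {K L T U : Set Term} {m n : ℕ} {p : List Term × Term} {t u v : Term}

/-- The standard rules of a deduction system, nonce creations included. -/
def stdRules : Set (List Term × Term) :=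
  DS.rules ∪ Set.range fun n => ([], Term.nonce n)

/-- One deduction with premises in `T`: the instance by `τ` of the standard rule `p` has the
conclusion `v`. -/
def Derives (T : Set Term) (p : List Term × Term) (τ : Subst) (v : Term) : Prop :=
  p ∈ DS.stdRules ∧ (∀ l ∈ p.1, l.subst τ ∈ T) ∧ p.2.subst τ = v

/-- The conclusions of the deductions with premises in `T`. -/
def consequences (T : Set Term) : Set Term :=
  {v | ∃ p τ, DS.Derives T p τ v}

/-- The terms obtained from `K` in at most `n` parallel rounds of deduction. -/
def rounds (K : Set Term) : ℕ → Set Term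
  | 0 => K
  | n + 1 => rounds K n ∪ DS.consequences (rounds K n)

/-- The least superset of `K` that is closed under deduction. -/
def closure (K : Set Term) : Set Term :=
  ⋃ n, DS.rounds K n

variable {DS}

theorem varsSet_snd_subset (hp : p ∈ DS.stdRules) : p.2.varsSet ⊆ varsT {l | l ∈ p.1} := by
  obtain hp | ⟨n, rfl⟩ := hp
  · exact DS.wf p hp
  · exact fun x hx => absurd hx (Term.ground_iff.1 (Term.ground_nonce n) x)

theorem consequences_mono (hTU : T ⊆ U) : DS.consequences T ⊆ DS.consequences U := by
  rintro v ⟨p, τ, hp, hprem, hv⟩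
  exact ⟨p, τ, hp, fun l hl => hTU (hprem l hl), hv⟩

theorem nonce_mem_consequences (n : ℕ) (T : Set Term) : Term.nonce n ∈ DS.consequences T :=
  ⟨([], .nonce n), .var, .inr ⟨n, rfl⟩, nofun, (Term.ground_nonce n).subst_eq _⟩

theorem monotone_rounds : Monotone (DS.rounds K) :=
  monotone_nat_of_le_succ fun _ => Set.subset_union_left

theorem mem_rounds_cases (ht : t ∈ DS.rounds K n) :
    t ∈ K ∨ ∃ m < n, t ∈ DS.consequences (DS.rounds K m) := by
  induction n with
  | zero => exact .inl ht
  | succ n ih =>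
    obtain ht | ht := ht
    · exact (ih ht).imp_right fun ⟨m, hm, htm⟩ => ⟨m, hm.trans n.lt_succ_self, htm⟩
    · exact .inr ⟨n, n.lt_succ_self, ht⟩

theorem rounds_subset_closure (K : Set Term) (n : ℕ) : DS.rounds K n ⊆ DS.closure K :=
  Set.subset_iUnion (DS.rounds K) n

theorem subset_closure (K : Set Term) : K ⊆ DS.closure K :=
  rounds_subset_closure K 0

theorem exists_mem_consequences_rounds (ht : t ∈ DS.consequences (DS.closure K)) :
    ∃ n, t ∈ DS.consequences (DS.rounds K n) := by
  obtain ⟨p, τ, hp, hprem, rfl⟩ := ht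
  have hround : ∀ l ∈ {l | l ∈ p.1}, ∀ᶠ n in Filter.atTop, l.subst τ ∈ DS.rounds K n := by
    intro l hl
    obtain ⟨n, hn⟩ := Set.mem_iUnion.1 (hprem l hl)
    exact Filter.eventually_atTop.2 ⟨n, fun m hnm => monotone_rounds hnm hn⟩
  obtain ⟨n, hn⟩ :=
    ((Filter.eventually_all_finite (List.finite_toSet p.1)).2 hround).exists
  exact ⟨n, p, τ, hp, hn, rfl⟩

theorem consequences_closure_subset (K : Set Term) :
    DS.consequences (DS.closure K) ⊆ DS.closure K := by
  intro t ht
  obtain ⟨n, hn⟩ := exists_mem_consequences_rounds ht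
  exact rounds_subset_closure K (n + 1) (.inr hn)

theorem closure_subset (hKT : K ⊆ T) (hT : DS.consequences T ⊆ T) : DS.closure K ⊆ T := by
  refine Set.iUnion_subset fun n => ?_
  induction n with
  | zero => exact hKT
  | succ n ih => exact Set.union_subset ih ((consequences_mono ih).trans hT)

theorem closure_mono (hKL : K ⊆ L) : DS.closure K ⊆ DS.closure L :=
  closure_subset (hKL.trans (subset_closure L)) (consequences_closure_subset L)

theorem ground_subst_snd {τ : Subst} (hp : p ∈ DS.stdRules)
    (hprem : ∀ l ∈ p.1, (l.subst τ).Ground) : (p.2.subst τ).Ground := by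
  refine Term.ground_subst_iff.2 fun x hx => ?_
  obtain ⟨l, hl, hxl⟩ := varsSet_snd_subset hp hx
  exact Term.ground_subst_iff.1 (hprem l hl) x hxl

/-! ### Derivations -/

theorem isDeduction_std_iff {l : List Term} {r : Term} :
    IsDeduction DS (.std l r) ↔ (∀ u ∈ l, u.Ground) ∧ r.Ground ∧
      ∃ p ∈ DS.stdRules, ∃ τ, l = p.1.map (Term.subst τ) ∧ r = p.2.subst τ := by
  refine and_congr_right fun _ => and_congr_right fun _ => ⟨?_, ?_⟩
  · rintro (⟨rfl, n, rfl⟩ | ⟨p, hp, hinst⟩)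
    · exact ⟨([], .nonce n), .inr ⟨n, rfl⟩, .var, rfl, ((Term.ground_nonce n).subst_eq _).symm⟩
    · exact ⟨p, .inl hp, hinst⟩
  · rintro ⟨p, hp | ⟨n, rfl⟩, τ, rfl, rfl⟩
    · exact .inr ⟨p, hp, τ, rfl, rfl⟩
    · exact .inl ⟨rfl, n, (Term.ground_nonce n).subst_eq τ⟩

theorem ground_rhs {s : Step} (hs : IsDeduction DS s) : s.rhs.Ground := by
  cases s with
  | recv t => exact hs
  | std l r => exact hs.2.1

variable (DS) in
/-- A derivation all of whose receptions lie in `K`. -/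
def IsDerivationFrom (K : Set Term) (D : List Step) : Prop :=
  IsDerivation DS D ∧ ∀ u, .recv u ∈ D → u ∈ K

variable {D E : List Step}

theorem mem_RHSset {k : ℕ} : t ∈ RHSset D k ↔ t ∈ (D.take k).map Step.rhs := by
  rw [List.mem_map]
  simp only [RHSset, List.mem_iff_getElem?, List.getElem?_take]
  exact ⟨by grind, by grind⟩

theorem IsDerivationFrom.rhs_mem_closure (hD : DS.IsDerivationFrom K D) {i : ℕ} {s : Step}
    (hs : D[i]? = some s) : s.rhs ∈ DS.closure K := by
  induction i using Nat.strong_induction_on generalizing s with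
  | _ i ih =>
    cases s with
    | recv u => exact subset_closure K (hD.2 u (List.mem_of_getElem? hs))
    | std l r =>
      obtain ⟨-, -, p, hp, τ, rfl, rfl⟩ :=
        isDeduction_std_iff.1 (hD.1.1 _ (List.mem_of_getElem? hs))
      refine consequences_closure_subset K ⟨p, τ, hp, fun l hl => ?_, rfl⟩
      obtain ⟨j, hji, s, hs, hsl⟩ := hD.1.2 i _ _ hs _ (List.mem_map_of_mem hl)
      exact hsl ▸ ih j hji hs

theorem isDerivationFrom_nil : DS.IsDerivationFrom K [] :=
  ⟨⟨nofun, nofun⟩, nofun⟩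

theorem IsDerivationFrom.ground_rhs (hD : DS.IsDerivationFrom K D) (ht : t ∈ D.map Step.rhs) :
    t.Ground := by
  obtain ⟨s, hs, rfl⟩ := List.mem_map.1 ht
  exact DeductionSystem.ground_rhs (hD.1.1 s hs)

theorem IsDerivationFrom.append_of_premises (hD : DS.IsDerivationFrom K D)
    (hded : ∀ s ∈ E, IsDeduction DS s) (hrecv : ∀ u, .recv u ∈ E → u ∈ K)
    (hprem : ∀ (i : ℕ) (l : List Term) (r : Term), E[i]? = some (.std l r) →
      ∀ u ∈ l, u ∈ (D ++ E.take i).map Step.rhs) :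
    DS.IsDerivationFrom K (D ++ E) := by
  refine ⟨⟨fun s hs => ?_, fun i l r hi u hu => ?_⟩, fun u hu => ?_⟩
  · exact (List.mem_append.1 hs).elim (hD.1.1 s) (hded s)
  · rw [mem_RHSset]
    obtain hiD | hDi := lt_or_ge i D.length
    · rw [List.getElem?_append_left hiD] at hi
      rw [List.take_append_of_le_length hiD.le]
      exact mem_RHSset.1 (hD.1.2 i l r hi u hu)
    · rw [List.getElem?_append_right hDi] at hi
      rw [List.take_append, List.take_of_length_le hDi]
      exact hprem _ l r hi u hu
  · exact (List.mem_append.1 hu).elim (hD.2 u) (hrecv u)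

theorem IsDerivationFrom.append (hD : DS.IsDerivationFrom K D) (hE : DS.IsDerivationFrom K E) :
    DS.IsDerivationFrom K (D ++ E) := by
  refine hD.append_of_premises hE.1.1 hE.2 fun i l r hi u hu => ?_
  rw [List.map_append]
  exact List.mem_append_right _ (mem_RHSset.1 (hE.1.2 i l r hi u hu))

theorem IsDerivationFrom.concat_std {l : List Term} (hD : DS.IsDerivationFrom K D)
    (hl : ∀ u ∈ l, u ∈ D.map Step.rhs) (ht : IsDeduction DS (.std l t)) :
    DS.IsDerivationFrom K (D ++ [.std l t]) := by
  refine hD.append_of_premises (by simpa using ht) (by simp) fun i l' r hi u hu => ?_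
  obtain ⟨rfl, -⟩ : l' = l ∧ r = t := by
    simpa using List.mem_singleton.1 (List.mem_of_getElem? hi)
  rw [List.map_append]
  exact List.mem_append_left _ (hl u hu)

theorem exists_isDerivationFrom_of_list {l : List Term}
    (hl : ∀ t ∈ l, ∃ D, DS.IsDerivationFrom K D ∧ t ∈ D.map Step.rhs) :
    ∃ D, DS.IsDerivationFrom K D ∧ ∀ t ∈ l, t ∈ D.map Step.rhs := by
  induction l with
  | nil => exact ⟨[], isDerivationFrom_nil, nofun⟩
  | cons t l ih =>
    obtain ⟨⟨D, hD, htD⟩, hl⟩ := List.forall_mem_cons.1 hl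
    obtain ⟨E, hE, hlE⟩ := ih hl
    refine ⟨D ++ E, hD.append hE, List.forall_mem_cons.2 ?_⟩
    rw [List.map_append]
    exact ⟨List.mem_append_left _ htD, fun u hu => List.mem_append_right _ (hlE u hu)⟩

theorem exists_isDerivationFrom_concat
    (hT : ∀ t ∈ T, ∃ D, DS.IsDerivationFrom K D ∧ t ∈ D.map Step.rhs)
    (hv : v ∈ DS.consequences T) : ∃ D l, DS.IsDerivationFrom K (D ++ [.std l v]) := by
  obtain ⟨p, τ, hp, hprem, rfl⟩ := hv
  obtain ⟨D, hD, hpD⟩ := exists_isDerivationFrom_of_list (l := p.1.map (Term.subst τ))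
    (List.forall_mem_map.2 fun l hl => hT _ (hprem l hl))
  have hground : ∀ u ∈ p.1.map (Term.subst τ), u.Ground := fun u hu => hD.ground_rhs (hpD u hu)
  exact ⟨D, _, hD.concat_std hpD <| isDeduction_std_iff.2
    ⟨hground, ground_subst_snd hp (List.forall_mem_map.1 hground), p, hp, τ, rfl, rfl⟩⟩

theorem exists_isDerivationFrom_of_mem_closure (hK : ∀ t ∈ K, t.Ground)
    (ht : t ∈ DS.closure K) : ∃ D, DS.IsDerivationFrom K D ∧ t ∈ D.map Step.rhs := by
  refine closure_subset (T := {t | ∃ D, DS.IsDerivationFrom K D ∧ t ∈ D.map Step.rhs})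
    (fun t ht => ⟨[.recv t], ⟨⟨?_, ?_⟩, ?_⟩, by simp [Step.rhs]⟩) (fun v hv => ?_) ht
  · simpa [IsDeduction] using hK t ht
  · simp [List.getElem?_singleton]
  · simpa using ht
  · obtain ⟨D, l, hD⟩ := exists_isDerivationFrom_concat (fun _ h => h) hv
    exact ⟨_, hD, by simp [Step.rhs]⟩

theorem der_eq_consequences_closure (hK : ∀ t ∈ K, t.Ground) :
    Der DS K = DS.consequences (DS.closure K) := by
  ext v
  constructor
  · rintro ⟨D, hD, hrecv, l, hlast⟩
    have hDK : DS.IsDerivationFrom K D :=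
      ⟨hD, fun u hu => (List.mem_iff_getElem?.1 hu).elim fun j hj => hrecv j u hj⟩
    rw [List.getLast?_eq_getElem?] at hlast
    obtain ⟨-, -, p, hp, τ, rfl, rfl⟩ :=
      isDeduction_std_iff.1 (hD.1 _ (List.mem_of_getElem? hlast))
    refine ⟨p, τ, hp, fun l hl => ?_, rfl⟩
    obtain ⟨j, -, s, hs, hsl⟩ := hD.2 _ _ _ hlast _ (List.mem_map_of_mem hl)
    exact hsl ▸ hDK.rhs_mem_closure hs
  · intro hv
    obtain ⟨D, l, hD⟩ :=
      exists_isDerivationFrom_concat (fun t => exists_isDerivationFrom_of_mem_closure hK) hv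
    exact ⟨_, hD.1, fun j u hj => hD.2 u (List.mem_of_getElem? hj), l, by simp⟩

/-! ### Subterm deduction systems -/

/-- The conclusion is an application or an atom whose immediate subterms are all premises, and the
premises are variables: the common shape of composition rules and nonce creations. -/
def Composes (p : List Term × Term) : Prop :=
  ¬ p.2.IsVar ∧ (∀ l ∈ p.1, l.IsVar) ∧ ∀ a ∈ p.2.args, a ∈ p.1

theorem composes_or_isSubterm (hDS : SubtermSystem DS) (hp : p ∈ DS.stdRules) :
    Composes p ∨ ∃ l ∈ p.1, Term.IsSubterm p.2 l := by
  obtain hp | ⟨n, rfl⟩ := hp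
  · refine (hDS p hp).imp_left ?_
    obtain ⟨l, r⟩ := p
    rintro ⟨f, xs, -, rfl, rfl⟩
    exact ⟨id, List.forall_mem_map.2 fun _ _ => trivial, fun a => id⟩
  · exact .inl ⟨id, nofun, nofun⟩

theorem mem_subT_or_consequences_of_mem_rounds (hDS : SubtermSystem DS) (hv : v ∈ DS.rounds K m)
    (huv : Term.IsSubterm u v) :
    u ∈ subT K ∨ ∃ m' < m, u ∈ DS.consequences (DS.rounds K m') := by
  induction m using Nat.strong_induction_on generalizing u v with
  | _ m ih =>
    obtain hv | ⟨m', hm', hvm'⟩ := mem_rounds_cases hv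
    · exact .inl ⟨v, hv, huv⟩
    have premise_case {w : Term} (hw : w ∈ DS.rounds K m') (huw : Term.IsSubterm u w) :
        u ∈ subT K ∨ ∃ m' < m, u ∈ DS.consequences (DS.rounds K m') :=
      (ih m' hm' hw huw).imp_right fun ⟨k, hk, huk⟩ => ⟨k, hk.trans hm', huk⟩
    have hv' := hvm'
    obtain ⟨p, τ, hp, hprem, rfl⟩ := hvm'
    obtain ⟨hvar, -, hargs⟩ | ⟨l, hl, hpl⟩ := composes_or_isSubterm hDS hp
    · obtain rfl | ⟨b, hb, hub⟩ := Term.isSubterm_iff.1 huv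
      · exact .inr ⟨m', hm', hv'⟩
      · rw [Term.args_subst τ hvar, List.mem_map] at hb
        obtain ⟨a, ha, rfl⟩ := hb
        exact premise_case (hprem a (hargs a ha)) hub
    · exact premise_case (hprem l hl) (huv.trans (hpl.subst τ))

theorem subT_closure_subset (hDS : SubtermSystem DS) (K : Set Term) :
    subT (DS.closure K) ⊆ subT K ∪ DS.consequences (DS.closure K) := by
  rintro u ⟨v, hv, huv⟩
  obtain ⟨n, hn⟩ := Set.mem_iUnion.1 hv
  exact (mem_subT_or_consequences_of_mem_rounds hDS hn huv).imp_right fun ⟨m, _, hm⟩ =>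
    consequences_mono (rounds_subset_closure K m) hm

end DeductionSystem

/-! ### First derivations from growing knowledge -/

namespace DeductionSystem

variable (DS : DeductionSystem) (K : ℕ → Set Term)

/-- The terms that are the conclusion of a deduction at some stage of the growing knowledge `K`. -/
def derivable : Set Term :=
  ⋃ i, DS.consequences (DS.closure (K i))

/-- The first stage at which `v` is derivable (`0` if there is none). -/
noncomputable def firstStage (v : Term) : ℕ :=
  sInf {i | v ∈ DS.consequences (DS.closure (K i))}

/-- The least number of rounds preceding a deduction of `v` at its first stage. -/
noncomputable def firstRound (v : Term) : ℕ :=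
  sInf {n | v ∈ DS.consequences (DS.rounds (K (DS.firstStage K v)) n)}

/-- The rule that concludes a chosen earliest derivation of `v`. -/
noncomputable def lastRule (v : Term) : List Term × Term :=
  Classical.epsilon fun p =>
    ∃ τ, DS.Derives (DS.rounds (K (DS.firstStage K v)) (DS.firstRound K v)) p τ v

/-- The instance of `lastRule` that concludes a chosen earliest derivation of `v`. -/
noncomputable def lastSubst (v : Term) : Subst :=
  Classical.epsilon fun τ =>
    DS.Derives (DS.rounds (K (DS.firstStage K v)) (DS.firstRound K v)) (DS.lastRule K v) τ v

variable {DS K} {i m : ℕ} {v : Term}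

theorem mem_consequences_firstStage (hv : v ∈ DS.derivable K) :
    v ∈ DS.consequences (DS.closure (K (DS.firstStage K v))) :=
  Nat.sInf_mem (Set.mem_iUnion.1 hv)

theorem mem_derivable (hv : v ∈ DS.consequences (DS.closure (K i))) : v ∈ DS.derivable K :=
  Set.mem_iUnion.2 ⟨i, hv⟩

theorem firstStage_le (hv : v ∈ DS.consequences (DS.closure (K i))) : DS.firstStage K v ≤ i :=
  Nat.sInf_le hv

theorem firstRound_le (hv : v ∈ DS.consequences (DS.rounds (K (DS.firstStage K v)) m)) :
    DS.firstRound K v ≤ m :=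
  Nat.sInf_le hv

theorem derives_lastRule (hv : v ∈ DS.derivable K) :
    DS.Derives (DS.rounds (K (DS.firstStage K v)) (DS.firstRound K v)) (DS.lastRule K v)
      (DS.lastSubst K v) v := by
  have hround : v ∈ DS.consequences (DS.rounds (K (DS.firstStage K v)) (DS.firstRound K v)) :=
    Nat.sInf_mem (exists_mem_consequences_rounds (mem_consequences_firstStage hv))
  exact Classical.epsilon_spec (Classical.epsilon_spec hround)

theorem mem_closure_premise {l : Term} (hv : v ∈ DS.derivable K) (hl : l ∈ (DS.lastRule K v).1) :
    l.subst (DS.lastSubst K v) ∈ DS.closure (K (DS.firstStage K v)) :=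
  rounds_subset_closure _ _ ((derives_lastRule hv).2.1 l hl)

end DeductionSystem

/-! ### Solutions of constraint systems -/

section Solution

open DeductionSystem

variable {DS : DeductionSystem} {S : CSystem} {σ : Subst} {t v : Term} {i j : ℕ}
  {c : Constraint}

theorem mem_csSub_of_getElem? (hc : S[i]? = some c) : c.term ∈ csSub S :=
  subset_subT _ ⟨c, List.mem_of_getElem? hc, rfl⟩

theorem finite_csTerms (S : CSystem) : (csTerms S).Finite :=
  (List.finite_toSet S).image Constraint.term

theorem finite_csSub (S : CSystem) : (csSub S).Finite :=
  subT_finite (finite_csTerms S)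

theorem knowledge_mono (S : CSystem) (σ : Subst) : Monotone (knowledge S σ) := by
  rintro i j hij _ ⟨k, hk, t, hkt⟩
  exact ⟨k, hk.trans hij, t, hkt⟩

theorem IsCS.exists_recv (hS : IsCS S) {x : ℕ} (hx : x ∈ csVars S) :
    ∃ (i : ℕ) (u : Term), S[i]? = some (.recv u) ∧ x ∈ u.varsSet := by
  obtain ⟨_, ⟨c, hc, rfl⟩, hxc⟩ := hx
  obtain ⟨i, hi⟩ := List.mem_iff_getElem?.1 hc
  cases c with
  | recv t => exact ⟨i, t, hi, hxc⟩
  | send t =>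
    obtain ⟨j, -, hj⟩ := hS.1 i t hi hxc
    exact ⟨j, hj⟩
  | neg t => exact hS.2 i t hi hxc

namespace IsSolution

theorem ground_subst (hσ : IsSolution DS S σ) (ht : t ∈ csSub S) : (t.subst σ).Ground := by
  refine Term.ground_subst_iff.2 fun x hx => hσ.ground x ?_
  rw [hσ.dom_eq]
  exact mem_subT_of_isSubterm ht hx

theorem ground_knowledge (hσ : IsSolution DS S σ) : ∀ v ∈ knowledge S σ i, v.Ground := by
  rintro _ ⟨j, -, t, hj, rfl⟩
  exact hσ.ground_subst (mem_csSub_of_getElem? hj)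

theorem der_knowledge (hσ : IsSolution DS S σ) (i : ℕ) :
    Der DS (knowledge S σ i) = DS.consequences (DS.closure (knowledge S σ i)) :=
  der_eq_consequences_closure hσ.ground_knowledge

theorem mem_closure_of_recv (hσ : IsSolution DS S σ) (hi : S[i]? = some (.recv t)) :
    t.subst σ ∈ DS.closure (knowledge S σ i) :=
  consequences_closure_subset _ (hσ.der_knowledge i ▸ hσ.recv_mem i t hi)

end IsSolution

/-- The terms that `σ` produces from the nonvariable subterms of `S`. -/
def skeleton (S : CSystem) (σ : Subst) : Set Term :=
  {u | ∃ t ∈ csSub S, ¬ t.IsVar ∧ t.subst σ = u}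

theorem IsSolution.mem_subT_knowledge_cases (hσ : IsSolution DS S σ) (hDS : SubtermSystem DS)
    (hS : IsCS S) (hv : v ∈ subT (knowledge S σ j)) :
    v ∈ skeleton S σ ∨ ∃ i < j, v ∈ DS.consequences (DS.closure (knowledge S σ i)) := by
  induction j using Nat.strong_induction_on with
  | _ j ih =>
    obtain ⟨_, ⟨k, hkj, t, hk, rfl⟩, hvt⟩ := hv
    obtain ⟨q, hq, hqvar, rfl⟩ | ⟨x, hx, hvx⟩ := Term.isSubterm_subst_cases hvt
    · exact .inl ⟨q, mem_subT_of_isSubterm (mem_csSub_of_getElem? hk) hq, hqvar, rfl⟩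
    obtain ⟨i, hik, u, hi, hxu⟩ := hS.1 k t hk hx
    have hvu : v ∈ subT (DS.closure (knowledge S σ i)) :=
      ⟨_, hσ.mem_closure_of_recv hi, hvx.trans (.apply_var σ hxu)⟩
    have hij : i < j := hik.trans_le hkj
    obtain hv | hv := subT_closure_subset hDS _ hvu
    · exact (ih i hij hv).imp_right fun ⟨i', hi', hvi'⟩ => ⟨i', hi'.trans hij, hvi'⟩
    · exact .inr ⟨i, hij, hv⟩

theorem IsSolution.mem_skeleton_or_derivable (hσ : IsSolution DS S σ) (hDS : SubtermSystem DS)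
    (hS : IsCS S) (hv : v ∈ subT (DS.closure (knowledge S σ i))) :
    v ∈ skeleton S σ ∨ v ∈ DS.derivable (knowledge S σ) := by
  obtain hv | hv := subT_closure_subset hDS _ hv
  · exact (hσ.mem_subT_knowledge_cases hDS hS hv).imp_right fun ⟨_, _, h⟩ => mem_derivable h
  · exact .inr (mem_derivable hv)

theorem IsSolution.mem_skeleton_of_decomposition (hσ : IsSolution DS S σ)
    (hDS : SubtermSystem DS) (hS : IsCS S) (hv : v ∈ DS.derivable (knowledge S σ)) {l : Term}
    (hl : l ∈ (DS.lastRule (knowledge S σ) v).1)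
    (hpl : Term.IsSubterm (DS.lastRule (knowledge S σ) v).2 l) : v ∈ skeleton S σ := by
  obtain ⟨-, hprem, hconcl⟩ := derives_lastRule hv
  have hvl := hconcl ▸ hpl.subst (DS.lastSubst (knowledge S σ) v)
  obtain hsub | ⟨m, hm, hvm⟩ := mem_subT_or_consequences_of_mem_rounds hDS (hprem l hl) hvl
  · refine (hσ.mem_subT_knowledge_cases hDS hS hsub).resolve_right ?_
    rintro ⟨i, hi, hvi⟩
    exact hi.not_ge (firstStage_le hvi)
  · exact absurd (firstRound_le hvm) hm.not_ge

theorem exists_send_firstStage (hv : v ∈ DS.derivable (knowledge S σ))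
    (hi : i < DS.firstStage (knowledge S σ) v) :
    ∃ t, S[DS.firstStage (knowledge S σ) v]? = some (.send t) ∧
      t.subst σ ∉ DS.closure (knowledge S σ i) := by
  by_contra! hsend
  obtain ⟨j, hj⟩ := Nat.exists_eq_add_one_of_ne_zero (Nat.ne_zero_of_lt hi)
  have hstage := mem_consequences_firstStage hv
  rw [hj] at hi hsend hstage
  have hsub : knowledge S σ (j + 1) ⊆ DS.closure (knowledge S σ j) := by
    rintro _ ⟨k, hk, t, hkt, rfl⟩
    obtain hk | rfl := Nat.le_succ_iff.1 hk
    · exact subset_closure _ ⟨k, hk, t, hkt, rfl⟩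
    · exact closure_mono (knowledge_mono S σ (Nat.lt_succ_iff.1 hi)) (hsend t hkt)
  have hle : DS.firstStage (knowledge S σ) v ≤ j :=
    firstStage_le (consequences_mono (closure_subset hsub (consequences_closure_subset _)) hstage)
  omega

/-! ### Patterns -/

variable (DS S σ) in
/-- `IsPattern DS S σ q θ` means that the instance of the term `q` by `θ` has to keep its shape: `q`
is a subterm of `S`, or of a premise of the rule that first derives an instance of such a term. -/
inductive IsPattern : Term → Subst → Prop
  | constraint {t : Term} : t ∈ csSub S → IsPattern t σ
  | premise {t l q : Term} : t ∈ csSub S → t.subst σ ∈ DS.derivable (knowledge S σ) →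
      l ∈ (DS.lastRule (knowledge S σ) (t.subst σ)).1 → Term.IsSubterm q l →
      IsPattern q (DS.lastSubst (knowledge S σ) (t.subst σ))

variable (DS S σ) in
/-- The instances of patterns. -/
def instances : Set Term :=
  {u | ∃ q θ, IsPattern DS S σ q θ ∧ q.subst θ = u}

variable (DS S σ) in
/-- The instances of nonvariable patterns, whose outermost symbol is imposed by a pattern. -/
def rigid : Set Term :=
  {u | ∃ q θ, IsPattern DS S σ q θ ∧ ¬ q.IsVar ∧ q.subst θ = u}

variable (DS S σ) in
/-- The terms that are matched by patterns through variables only: nothing depends on their inner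
structure, so that they can be replaced. -/
def collapsible : Set Term :=
  instances DS S σ \ rigid DS S σ

theorem IsPattern.of_isSubterm {q r : Term} {θ : Subst} (hq : IsPattern DS S σ q θ)
    (hrq : Term.IsSubterm r q) : IsPattern DS S σ r θ := by
  cases hq with
  | constraint ht => exact .constraint (mem_subT_of_isSubterm ht hrq)
  | premise ht hder hl hql => exact .premise ht hder hl (hrq.trans hql)

theorem subst_mem_instances (ht : t ∈ csSub S) : t.subst σ ∈ instances DS S σ :=
  ⟨t, σ, .constraint ht, rfl⟩

theorem skeleton_subset_rigid : skeleton S σ ⊆ rigid DS S σ := by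
  rintro _ ⟨t, ht, htvar, rfl⟩
  exact ⟨t, σ, .constraint ht, htvar, rfl⟩

theorem args_subset_instances (hv : v ∈ rigid DS S σ) {a : Term} (ha : a ∈ v.args) :
    a ∈ instances DS S σ := by
  obtain ⟨q, θ, hq, hqvar, rfl⟩ := hv
  rw [Term.args_subst θ hqvar, List.mem_map] at ha
  obtain ⟨b, hb, rfl⟩ := ha
  exact ⟨b, θ, hq.of_isSubterm (.of_mem_args hb), rfl⟩

theorem IsSolution.collapsible_subset_derivable (hσ : IsSolution DS S σ) (hDS : SubtermSystem DS)
    (hS : IsCS S) : collapsible DS S σ ⊆ DS.derivable (knowledge S σ) := by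
  rintro v ⟨⟨q, θ, hq, rfl⟩, hrigid⟩
  have hclosure : ∃ i, q.subst θ ∈ subT (DS.closure (knowledge S σ i)) := by
    have hqvar : q.IsVar := by
      by_contra hqvar
      exact hrigid ⟨q, θ, hq, hqvar, rfl⟩
    obtain ⟨x, rfl⟩ := Term.eq_var_of_isVar hqvar
    cases hq with
    | constraint hx =>
      obtain ⟨i, u, hi, hxu⟩ := hS.exists_recv hx
      exact ⟨i, _, hσ.mem_closure_of_recv hi, Term.IsSubterm.subst σ hxu⟩
    | premise ht hder hl hxl => exact ⟨_, _, mem_closure_premise hder hl, hxl.subst _⟩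
  obtain ⟨i, hi⟩ := hclosure
  exact (hσ.mem_skeleton_or_derivable hDS hS hi).resolve_left
    fun h => hrigid (skeleton_subset_rigid h)

variable (DS) in
/-- The subterms of the premises of the rules of `DS`. -/
def premiseSub : Set Term :=
  subT (⋃ p ∈ DS.rules, {l | l ∈ p.1})

theorem finite_premiseSub (DS : DeductionSystem) : (premiseSub DS).Finite :=
  subT_finite (DS.finite.biUnion fun p _ => List.finite_toSet p.1)

theorem mem_premiseSub {p : List Term × Term} {l q : Term} (hp : p ∈ DS.stdRules) (hl : l ∈ p.1)
    (hql : Term.IsSubterm q l) : q ∈ premiseSub DS := by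
  obtain hp | ⟨n, rfl⟩ := hp
  · exact ⟨l, Set.mem_biUnion hp hl, hql⟩
  · cases hl

theorem instances_subset : instances DS S σ ⊆ Term.subst σ '' csSub S ∪
    Set.image2 (fun t q => q.subst (DS.lastSubst (knowledge S σ) (t.subst σ)))
      (csSub S) (premiseSub DS) := by
  rintro _ ⟨q, θ, ht | ⟨ht, hder, hl, hql⟩, rfl⟩
  · exact .inl ⟨q, ht, rfl⟩
  · exact .inr ⟨_, ht, q, mem_premiseSub (derives_lastRule hder).1 hl hql, rfl⟩

theorem finite_instances : (instances DS S σ).Finite :=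
  (((finite_csSub S).image _).union ((finite_csSub S).image2 _ (finite_premiseSub DS))).subset
    instances_subset

theorem ncard_instances_le :
    (instances DS S σ).ncard ≤ (1 + (premiseSub DS).ncard) * csSize S := by
  have hS := finite_csSub S
  have hprem := finite_premiseSub DS
  calc (instances DS S σ).ncard
    _ ≤ (Term.subst σ '' csSub S).ncard + (Set.image2 _ (csSub S) (premiseSub DS)).ncard :=
      (Set.ncard_le_ncard instances_subset ((hS.image _).union (hS.image2 _ hprem))).trans
        (Set.ncard_union_le _ _)
    _ ≤ csSize S + csSize S * (premiseSub DS).ncard := by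
      refine add_le_add (Set.ncard_image_le hS) ?_
      rw [← Set.image_prod, csSize, sizeT, ← csSub, ← Set.ncard_prod]
      exact Set.ncard_image_le (hS.prod hprem)
    _ = (1 + (premiseSub DS).ncard) * csSize S := by ring

end Solution

/-! ### The free pairing symbol -/

/-- `f` is a pairing symbol whose composition rule is the only rule of `DS` in which `f` occurs. -/
def IsFreePairing (DS : DeductionSystem) (f : ℕ) : Prop :=
  ∃ x₁ x₂ : ℕ, x₁ ≠ x₂ ∧
    ([Term.var x₁, Term.var x₂], Term.func f [Term.var x₁, Term.var x₂]) ∈ DS.rules ∧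
    ∀ p ∈ DS.rules, OccursInRule f p →
      p = ([Term.var x₁, Term.var x₂], Term.func f [Term.var x₁, Term.var x₂])

namespace IsFreePairing

open DeductionSystem

variable {DS : DeductionSystem} {f : ℕ} {T : Set Term} {s t : Term} {p : List Term × Term}

theorem func_mem_consequences (hf : IsFreePairing DS f) (hs : s ∈ T) (ht : t ∈ T) :
    Term.func f [s, t] ∈ DS.consequences T := by
  obtain ⟨x₁, x₂, hne, hp, -⟩ := hf
  refine ⟨_, fun x => if x = x₁ then s else t, .inl hp, ?_, ?_⟩
  · simp [Term.subst_var, hs, ht, hne.symm]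
  · rw [Term.subst_of_not_isVar _ id]
    simp [Term.mapArgs, Term.subst_var, hne.symm]

theorem not_occursInRule_or_eq (hf : IsFreePairing DS f) (hp : p ∈ DS.stdRules) :
    ¬ OccursInRule f p ∨
      ∃ x₁ x₂, p = ([Term.var x₁, Term.var x₂], Term.func f [Term.var x₁, Term.var x₂]) := by
  obtain ⟨x₁, x₂, -, -, honly⟩ := hf
  obtain hp | ⟨n, rfl⟩ := hp
  · exact or_iff_not_imp_left.2 fun hocc => ⟨x₁, x₂, honly p hp (not_not.1 hocc)⟩
  · refine .inl ?_
    rintro (⟨l, hl, -⟩ | ⟨l, hl⟩)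
    · cases hl
    · cases hl

end IsFreePairing

theorem Term.OccursFun.of_isSubterm {f : ℕ} {s t : Term} (hs : s.OccursFun f)
    (hst : Term.IsSubterm s t) : t.OccursFun f :=
  hs.imp fun _ h => h.trans hst

theorem Term.occursFun_of_subst_eq_func {f : ℕ} {t : Term} {σ : Subst} {l : List Term}
    (ht : ¬ t.IsVar) (htf : t.subst σ = .func f l) : t.OccursFun f := by
  rw [subst_of_not_isVar σ ht] at htf
  cases t with
  | func g l' =>
    obtain ⟨rfl, -⟩ := Term.func.inj htf
    exact ⟨l', .refl _⟩
  | _ => cases htf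

/-! ### Collapsing a solution -/

/-- What is needed to collapse the solution `σ` of `S`: a free pairing symbol, and an injective
assignment of nonces that do not occur in the instance of `S` to the collapsible terms. -/
structure CollapseData (DS : DeductionSystem) (S : CSystem) (σ : Subst) where
  subtermSystem : SubtermSystem DS
  isCS : IsCS S
  isSolution : IsSolution DS S σ
  pair : ℕ
  isFreePairing : IsFreePairing DS pair
  fresh : Term → ℕ
  injOn_fresh : (collapsible DS S σ).InjOn fresh
  nonce_fresh_notMem : ∀ v, Term.nonce (fresh v) ∉ subT (Term.subst σ '' csTerms S)

namespace CollapseData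

open DeductionSystem

variable {DS : DeductionSystem} {S : CSystem} {σ : Subst} (d : CollapseData DS S σ)
  {i j k : ℕ} {q t u v : Term} {θ : Subst}

/-- The collapsed form of the term sent at position `k`, or a nonce if no term is sent there. A
collapsible term that becomes derivable before `k` is replaced by a pair which keeps track of its
first stage through the corresponding anchor. -/
noncomputable def anchor (d : CollapseData DS S σ) (k : ℕ) : Term :=
  match S[k]? with
  | some (.send t) => (t.subst σ).replace (collapsible DS S σ) fun v =>
      if _ : DS.firstStage (knowledge S σ) v < k then
        .func d.pair [.nonce (d.fresh v), anchor d (DS.firstStage (knowledge S σ) v)]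
      else v
  | _ => .nonce 0
termination_by k
decreasing_by assumption

/-- The pair standing for a collapsible term: it is derivable from the stage at which the term
becomes derivable, and not before, since its second component is only known from then on. -/
noncomputable def pseudonym (v : Term) : Term :=
  .func d.pair [.nonce (d.fresh v), d.anchor (DS.firstStage (knowledge S σ) v)]

/-- Replaces the maximal collapsible subterms of a term by their pseudonyms. -/
noncomputable def collapse : Term → Term :=
  Term.replace (collapsible DS S σ) d.pseudonym

/-- Replaces the pseudonyms in a term by the collapsible terms they stand for. -/
noncomputable def restore : Term → Term :=
  Term.replace (d.pseudonym '' collapsible DS S σ)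
    (Function.invFunOn d.pseudonym (collapsible DS S σ))

theorem collapse_of_mem (hv : v ∈ collapsible DS S σ) : d.collapse v = d.pseudonym v :=
  Term.replace_of_mem hv

theorem collapse_of_notMem (hv : v ∉ collapsible DS S σ) :
    d.collapse v = v.mapArgs d.collapse :=
  Term.replace_of_notMem hv

theorem derivable_of_mem_collapsible (d : CollapseData DS S σ) (hv : v ∈ collapsible DS S σ) :
    v ∈ DS.derivable (knowledge S σ) :=
  d.isSolution.collapsible_subset_derivable d.subtermSystem d.isCS hv

theorem anchor_eq_of_send (hk : S[k]? = some (.send t)) : d.anchor k = d.collapse (t.subst σ) := by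
  rw [anchor, hk]
  refine Term.replace_congr fun u hu hut => dif_pos ?_
  have huk : u ∈ subT (knowledge S σ k) := ⟨_, ⟨k, le_rfl, t, hk, rfl⟩, hut⟩
  obtain huskel | ⟨i, hi, hui⟩ :=
    d.isSolution.mem_subT_knowledge_cases d.subtermSystem d.isCS huk
  · exact absurd (skeleton_subset_rigid huskel) hu.2
  · exact (firstStage_le hui).trans_lt hi

theorem anchor_mem_or_eq_nonce (k : ℕ) :
    (∃ t, S[k]? = some (.send t) ∧ d.anchor k = d.collapse (t.subst σ)) ∨
      d.anchor k = .nonce 0 := by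
  by_cases hk : ∃ t, S[k]? = some (.send t)
  · obtain ⟨t, ht⟩ := hk
    exact .inl ⟨t, ht, d.anchor_eq_of_send ht⟩
  · refine .inr ?_
    rw [anchor]
    split
    · exact absurd ⟨_, ‹_›⟩ hk
    · rfl

theorem ground_func_pair (n : ℕ) (ht : t.Ground) : (Term.func d.pair [.nonce n, t]).Ground :=
  Term.ground_of_args id (by simpa [Term.args] using ⟨Term.ground_nonce n, ht⟩)

theorem ground_anchor (k : ℕ) : (d.anchor k).Ground := by
  induction k using Nat.strong_induction_on with
  | _ k ih =>
    rw [anchor]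
    split
    · rename_i t hk
      refine (d.isSolution.ground_subst (mem_csSub_of_getElem? hk)).replace fun u _ hu => ?_
      split_ifs with h
      exacts [d.ground_func_pair _ (ih _ h), hu]
    · exact Term.ground_nonce 0

theorem ground_collapse (hv : v.Ground) : (d.collapse v).Ground :=
  hv.replace fun _ _ _ => d.ground_func_pair _ (d.ground_anchor _)

/-! ### Collapsing preserves derivability -/

theorem collapse_subst (hq : IsPattern DS S σ q θ) :
    d.collapse (q.subst θ) = q.subst fun x => d.collapse (θ x) :=
  Term.replace_subst fun _ hrq hr hcoll => hcoll.2 ⟨_, θ, hq.of_isSubterm hrq, hr, rfl⟩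

theorem collapse_subst_csSub (ht : t ∈ csSub S) :
    d.collapse (t.subst σ) = t.subst fun x => d.collapse (σ x) :=
  d.collapse_subst (.constraint ht)

theorem collapse_lastRule (hv : v ∈ DS.derivable (knowledge S σ)) (hcoll : v ∉ collapsible DS S σ)
    (hq : q ∈ (DS.lastRule (knowledge S σ) v).1 ∨ q = (DS.lastRule (knowledge S σ) v).2) :
    d.collapse (q.subst (DS.lastSubst (knowledge S σ) v)) =
      q.subst fun x => d.collapse (DS.lastSubst (knowledge S σ) v x) := by
  obtain ⟨hp, -, hconcl⟩ := derives_lastRule hv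
  obtain ⟨-, hvars, hargs⟩ | ⟨l, hl, hpl⟩ := composes_or_isSubterm d.subtermSystem hp
  · refine Term.replace_subst fun r hrq hr => ?_
    obtain hq | rfl := hq
    · obtain ⟨x, rfl⟩ := Term.eq_var_of_isVar (hvars q hq)
      obtain rfl | ⟨a, ha, -⟩ := Term.isSubterm_iff.1 hrq
      exacts [absurd trivial hr, nomatch ha]
    · obtain rfl | ⟨a, ha, hra⟩ := Term.isSubterm_iff.1 hrq
      · rwa [hconcl]
      · obtain ⟨x, rfl⟩ := Term.eq_var_of_isVar (hvars a (hargs a ha))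
        obtain rfl | ⟨b, hb, -⟩ := Term.isSubterm_iff.1 hra
        exacts [absurd trivial hr, nomatch hb]
  · obtain ⟨t, ht, -, rfl⟩ :=
      d.isSolution.mem_skeleton_of_decomposition d.subtermSystem d.isCS hv hl hpl
    obtain hq | rfl := hq
    · exact d.collapse_subst (.premise ht hv hq (.refl q))
    · exact d.collapse_subst (.premise ht hv hl hpl)

theorem anchor_mem_closure (hki : k ≤ i) :
    d.anchor k ∈ DS.closure (d.collapse '' knowledge S σ i) := by
  obtain ⟨t, hk, heq⟩ | heq := d.anchor_mem_or_eq_nonce k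
  · exact heq ▸ subset_closure _ ⟨_, ⟨k, hki, t, hk, rfl⟩, rfl⟩
  · exact heq ▸ consequences_closure_subset _ (nonce_mem_consequences 0 _)

theorem closure_collapse_mono (hij : i ≤ j) :
    DS.closure (d.collapse '' knowledge S σ i) ⊆ DS.closure (d.collapse '' knowledge S σ j) :=
  closure_mono (Set.image_mono (knowledge_mono S σ hij))

theorem pseudonym_mem_consequences (v : Term) : d.pseudonym v ∈
    DS.consequences (DS.closure (d.collapse '' knowledge S σ (DS.firstStage (knowledge S σ) v))) :=
  d.isFreePairing.func_mem_consequences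
    (consequences_closure_subset _ (nonce_mem_consequences _ _)) (d.anchor_mem_closure le_rfl)

theorem collapse_mem_consequences_firstStage {v : Term} (hv : v ∈ DS.derivable (knowledge S σ)) :
    d.collapse v ∈ DS.consequences
      (DS.closure (d.collapse '' knowledge S σ (DS.firstStage (knowledge S σ) v))) := by
  by_cases hcoll : v ∈ collapsible DS S σ
  · exact d.collapse_of_mem hcoll ▸ d.pseudonym_mem_consequences v
  obtain ⟨hp, hprem, hconcl⟩ := derives_lastRule hv
  refine ⟨_, fun x => d.collapse (DS.lastSubst (knowledge S σ) v x), hp, fun l hl => ?_, ?_⟩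
  · rw [← d.collapse_lastRule hv hcoll (.inl hl)]
    obtain hl | ⟨m, _, hlm⟩ := mem_rounds_cases (hprem l hl)
    · exact subset_closure _ (Set.mem_image_of_mem _ hl)
    have hl' := consequences_mono (rounds_subset_closure _ m) hlm
    have hstage := firstStage_le hl'
    exact d.closure_collapse_mono hstage <| consequences_closure_subset _ <|
      collapse_mem_consequences_firstStage (mem_derivable hl')
  · rw [← d.collapse_lastRule hv hcoll (.inr rfl), hconcl]
termination_by (DS.firstStage (knowledge S σ) v, DS.firstRound (knowledge S σ) v)
decreasing_by
  obtain hlt | heq := hstage.lt_or_eq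
  · exact .left _ _ hlt
  · rw [heq]
    exact .right _ ((firstRound_le (heq ▸ hlm)).trans_lt ‹m < _›)

theorem collapse_mem_consequences
    (hv : v ∈ DS.consequences (DS.closure (knowledge S σ i))) :
    d.collapse v ∈ DS.consequences (DS.closure (d.collapse '' knowledge S σ i)) :=
  consequences_mono (d.closure_collapse_mono (firstStage_le hv))
    (d.collapse_mem_consequences_firstStage (mem_derivable hv))

/-! ### Restoring preserves derivability -/

theorem injOn_pseudonym : (collapsible DS S σ).InjOn d.pseudonym := by
  intro u hu v hv huv
  simp only [pseudonym, Term.func.injEq, List.cons.injEq, Term.nonce.injEq] at huv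
  exact d.injOn_fresh hu hv huv.2.1

theorem restore_pseudonym (hv : v ∈ collapsible DS S σ) : d.restore (d.pseudonym v) = v :=
  (Term.replace_of_mem (Set.mem_image_of_mem _ hv)).trans
    (d.injOn_pseudonym.leftInvOn_invFunOn hv)

theorem collapse_eq_nonce {n : ℕ} (hv : d.collapse v = .nonce n) : v = .nonce n := by
  by_cases hcoll : v ∈ collapsible DS S σ
  · rw [d.collapse_of_mem hcoll] at hv
    cases hv
  · rw [d.collapse_of_notMem hcoll] at hv
    cases v <;> simp_all [Term.mapArgs]

theorem collapse_notMem_image_pseudonym (hv : v ∈ subT (Term.subst σ '' csTerms S))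
    (hcoll : v ∉ collapsible DS S σ) : d.collapse v ∉ d.pseudonym '' collapsible DS S σ := by
  rintro ⟨u, -, huv⟩
  have hargs : (d.pseudonym u).args = v.args.map d.collapse := by
    rw [huv, d.collapse_of_notMem hcoll, Term.args_mapArgs]
  obtain ⟨a, ha, hau⟩ := List.mem_map.1 (hargs ▸ List.mem_cons_self :
    Term.nonce (d.fresh u) ∈ v.args.map d.collapse)
  rw [d.collapse_eq_nonce hau] at ha
  exact d.nonce_fresh_notMem u (mem_subT_of_isSubterm hv (.of_mem_args ha))

theorem restore_collapse (hv : v ∈ subT (Term.subst σ '' csTerms S)) :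
    d.restore (d.collapse v) = v := by
  induction v using Term.args_induction with
  | step v ih =>
    by_cases hcoll : v ∈ collapsible DS S σ
    · rw [d.collapse_of_mem hcoll, d.restore_pseudonym hcoll]
    · rw [restore, Term.replace_of_notMem (d.collapse_notMem_image_pseudonym hv hcoll), ← restore,
        d.collapse_of_notMem hcoll, Term.mapArgs_mapArgs]
      exact Term.mapArgs_eq_self fun a ha => ih a ha (mem_subT_of_isSubterm hv (.of_mem_args ha))

theorem restore_collapse_subst (ht : t ∈ csSub S) :
    d.restore (d.collapse (t.subst σ)) = t.subst σ := by
  obtain ⟨w, hw, htw⟩ := ht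
  exact d.restore_collapse ⟨_, Set.mem_image_of_mem _ hw, htw.subst σ⟩

theorem firstStage_le_of_restore_anchor (hv : v ∈ DS.derivable (knowledge S σ))
    (hanchor : d.restore (d.anchor (DS.firstStage (knowledge S σ) v)) ∈
      DS.closure (knowledge S σ i)) :
    DS.firstStage (knowledge S σ) v ≤ i := by
  by_contra! hi
  obtain ⟨t, ht, htnot⟩ := exists_send_firstStage hv hi
  have htS : t ∈ csSub S := mem_csSub_of_getElem? ht
  rw [d.anchor_eq_of_send ht, d.restore_collapse_subst htS] at hanchor
  exact htnot hanchor

theorem restore_subst_of_not_occursFun (ht : ¬ t.OccursFun d.pair) :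
    d.restore (t.subst θ) = t.subst fun x => d.restore (θ x) := by
  refine Term.replace_subst fun r hrt hr => ?_
  rintro ⟨u, -, hur⟩
  exact ht ((Term.occursFun_of_subst_eq_func hr hur.symm).of_isSubterm hrt)

theorem restore_pair_mem_consequences
    (hu : d.restore u ∈ DS.closure (knowledge S σ i))
    (hv : d.restore v ∈ DS.closure (knowledge S σ i)) :
    d.restore (.func d.pair [u, v]) ∈ DS.consequences (DS.closure (knowledge S σ i)) := by
  by_cases hpseudo : Term.func d.pair [u, v] ∈ d.pseudonym '' collapsible DS S σ
  · obtain ⟨w, hw, hwuv⟩ := hpseudo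
    obtain ⟨-, rfl⟩ : _ ∧ d.anchor (DS.firstStage (knowledge S σ) w) = v := by
      simpa [pseudonym] using hwuv
    have hder := d.derivable_of_mem_collapsible hw
    rw [← hwuv, d.restore_pseudonym hw]
    exact consequences_mono
      (closure_mono (knowledge_mono S σ (d.firstStage_le_of_restore_anchor hder hv)))
      (mem_consequences_firstStage hder)
  · rw [restore, Term.replace_of_notMem hpseudo]
    exact d.isFreePairing.func_mem_consequences hu hv

theorem restore_mem_consequences
    (hv : v ∈ DS.consequences (d.restore ⁻¹' DS.closure (knowledge S σ i))) :
    d.restore v ∈ DS.consequences (DS.closure (knowledge S σ i)) := by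
  obtain ⟨p, τ, hp, hprem, rfl⟩ := hv
  obtain hocc | ⟨x₁, x₂, rfl⟩ := d.isFreePairing.not_occursInRule_or_eq hp
  · obtain ⟨hpremocc, hconclocc⟩ := not_or.1 hocc
    refine ⟨p, fun x => d.restore (τ x), hp, fun l hl => ?_,
      (d.restore_subst_of_not_occursFun hconclocc).symm⟩
    rw [← d.restore_subst_of_not_occursFun fun h => hpremocc ⟨l, hl, h⟩]
    exact hprem l hl
  · rw [Term.subst_of_not_isVar τ id]
    exact d.restore_pair_mem_consequences (hprem _ (by simp)) (hprem _ (by simp))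

theorem mem_consequences_of_collapse (ht : t ∈ csSub S)
    (hcoll : d.collapse (t.subst σ) ∈
      DS.consequences (DS.closure (d.collapse '' knowledge S σ i))) :
    t.subst σ ∈ DS.consequences (DS.closure (knowledge S σ i)) := by
  have hknowledge : d.collapse '' knowledge S σ i ⊆
      d.restore ⁻¹' DS.closure (knowledge S σ i) := by
    rintro _ ⟨_, ⟨j, hj, u, hu, rfl⟩, rfl⟩
    rw [Set.mem_preimage, d.restore_collapse_subst (t := u) (mem_csSub_of_getElem? hu)]
    exact subset_closure _ ⟨j, hj, u, hu, rfl⟩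
  have hclosed : DS.consequences (d.restore ⁻¹' DS.closure (knowledge S σ i)) ⊆
      d.restore ⁻¹' DS.closure (knowledge S σ i) :=
    fun v hv => consequences_closure_subset _ (d.restore_mem_consequences hv)
  rw [← d.restore_collapse_subst ht]
  exact d.restore_mem_consequences (consequences_mono (closure_subset hknowledge hclosed) hcoll)

/-! ### The collapsed solution -/

open Classical in
/-- The collapsed solution: `σ` with its values collapsed, restricted to the variables of `S`. -/
noncomputable def collapsedSubst (x : ℕ) : Term :=
  if x ∈ csVars S then d.collapse (σ x) else .var x

theorem collapsedSubst_of_mem {x : ℕ} (hx : x ∈ csVars S) :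
    d.collapsedSubst x = d.collapse (σ x) :=
  if_pos hx

theorem subst_collapsedSubst (ht : t ∈ csSub S) :
    t.subst d.collapsedSubst = d.collapse (t.subst σ) := by
  rw [d.collapse_subst_csSub ht]
  exact Term.subst_congr fun x hx => d.collapsedSubst_of_mem (mem_subT_of_isSubterm ht hx)

theorem ground_collapsedSubst {x : ℕ} (hx : x ∈ csVars S) : (d.collapsedSubst x).Ground := by
  rw [d.collapsedSubst_of_mem hx]
  refine d.ground_collapse (d.isSolution.ground x ?_)
  rwa [d.isSolution.dom_eq]

theorem dom_collapsedSubst : Subst.dom d.collapsedSubst = csVars S := by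
  ext x
  refine ⟨fun hx => ?_, fun hx hvar => ?_⟩
  · by_contra hxS
    exact hx (if_neg hxS)
  · exact Term.not_ground_var x (hvar ▸ d.ground_collapsedSubst hx)

theorem isGround_collapsedSubst : Subst.IsGround d.collapsedSubst :=
  fun _ hx => d.ground_collapsedSubst (d.dom_collapsedSubst ▸ hx)

theorem idem_collapsedSubst : Subst.Idem d.collapsedSubst := by
  intro x
  by_cases hx : x ∈ Subst.dom d.collapsedSubst
  · exact (d.isGround_collapsedSubst x hx).subst_eq _
  · rw [not_not.1 hx, Term.subst_var, not_not.1 hx]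

theorem knowledge_collapsedSubst (i : ℕ) :
    knowledge S d.collapsedSubst i = d.collapse '' knowledge S σ i := by
  ext u
  constructor
  · rintro ⟨j, hj, t, ht, rfl⟩
    exact ⟨_, ⟨j, hj, t, ht, rfl⟩, (d.subst_collapsedSubst (mem_csSub_of_getElem? ht)).symm⟩
  · rintro ⟨_, ⟨j, hj, t, ht, rfl⟩, rfl⟩
    exact ⟨j, hj, t, ht, (d.subst_collapsedSubst (mem_csSub_of_getElem? ht)).symm⟩

theorem subst_collapsedSubst_mem_der_iff (ht : t ∈ csSub S) :
    t.subst d.collapsedSubst ∈ Der DS (knowledge S d.collapsedSubst i) ↔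
      t.subst σ ∈ Der DS (knowledge S σ i) := by
  have hground : ∀ u ∈ d.collapse '' knowledge S σ i, u.Ground := by
    rintro _ ⟨u, hu, rfl⟩
    exact d.ground_collapse (d.isSolution.ground_knowledge u hu)
  rw [d.knowledge_collapsedSubst, der_eq_consequences_closure hground,
    d.isSolution.der_knowledge, d.subst_collapsedSubst ht]
  exact ⟨d.mem_consequences_of_collapse ht, d.collapse_mem_consequences⟩

theorem isSolution_collapsedSubst : IsSolution DS S d.collapsedSubst where
  ground := d.isGround_collapsedSubst
  idem := d.idem_collapsedSubst
  dom_eq := d.dom_collapsedSubst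
  recv_mem i t hi := (d.subst_collapsedSubst_mem_der_iff (mem_csSub_of_getElem? hi)).2
    (d.isSolution.recv_mem i t hi)
  neg_not_mem i t hi := (d.subst_collapsedSubst_mem_der_iff (mem_csSub_of_getElem? hi)).not.2
    (d.isSolution.neg_not_mem i t hi)

/-! ### Size of the collapsed solution -/

/-- A finite set of terms that is closed under subterms and contains the values of the collapsed
solution. -/
def collapsedTerms : Set Term :=
  d.collapse '' instances DS S σ ∪ (Term.nonce ∘ d.fresh) '' instances DS S σ ∪ {.nonce 0}

theorem anchor_mem_collapsedTerms (k : ℕ) : d.anchor k ∈ d.collapsedTerms := by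
  obtain ⟨t, hk, heq⟩ | heq := d.anchor_mem_or_eq_nonce k
  · exact heq ▸ .inl (.inl ⟨_, subst_mem_instances (mem_csSub_of_getElem? hk), rfl⟩)
  · exact heq ▸ .inr rfl

theorem args_subset_collapsedTerms {a : Term} (ht : t ∈ d.collapsedTerms) (ha : a ∈ t.args) :
    a ∈ d.collapsedTerms := by
  obtain (⟨v, hv, rfl⟩ | ⟨v, -, rfl⟩) | rfl := ht
  · by_cases hcoll : v ∈ collapsible DS S σ
    · rw [d.collapse_of_mem hcoll] at ha
      obtain rfl | rfl : a = .nonce (d.fresh v) ∨ a = d.anchor _ := by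
        simpa [pseudonym, Term.args] using ha
      exacts [.inl (.inr ⟨v, hv, rfl⟩), d.anchor_mem_collapsedTerms _]
    · have hrigid : v ∈ rigid DS S σ := by
        by_contra hrigid
        exact hcoll ⟨hv, hrigid⟩
      rw [d.collapse_of_notMem hcoll, Term.args_mapArgs, List.mem_map] at ha
      obtain ⟨b, hb, rfl⟩ := ha
      exact .inl (.inl ⟨b, args_subset_instances hrigid hb, rfl⟩)
  · cases ha
  · cases ha

theorem subT_img_collapsedSubst_subset :
    subT (Subst.img d.collapsedSubst) ⊆ d.collapsedTerms := by
  rintro u ⟨_, ⟨x, hx, rfl⟩, hu⟩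
  rw [d.dom_collapsedSubst] at hx
  refine Term.mem_of_isSubterm (fun t ht a => d.args_subset_collapsedTerms ht) hu (.inl (.inl ?_))
  rw [d.collapsedSubst_of_mem hx, ← Term.subst_var σ x]
  exact Set.mem_image_of_mem _ (subst_mem_instances hx)

theorem sizeSubst_collapsedSubst_le :
    sizeSubst d.collapsedSubst ≤ 2 * (1 + (premiseSub DS).ncard) * csSize S + 1 := by
  have hfin := finite_instances (DS := DS) (S := S) (σ := σ)
  calc sizeSubst d.collapsedSubst
    _ ≤ d.collapsedTerms.ncard := Set.ncard_le_ncard d.subT_img_collapsedSubst_subset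
      (((hfin.image _).union (hfin.image _)).union (Set.finite_singleton _))
    _ ≤ (d.collapse '' instances DS S σ).ncard +
        ((Term.nonce ∘ d.fresh) '' instances DS S σ).ncard + 1 := by
      refine (Set.ncard_union_le _ _).trans (add_le_add ?_ (Set.ncard_singleton _).le)
      exact Set.ncard_union_le _ _
    _ ≤ (instances DS S σ).ncard + (instances DS S σ).ncard + 1 :=
      Nat.succ_le_succ (add_le_add (Set.ncard_image_le hfin) (Set.ncard_image_le hfin))
    _ ≤ 2 * (1 + (premiseSub DS).ncard) * csSize S + 1 := by
      linarith [ncard_instances_le (DS := DS) (S := S) (σ := σ)]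

end CollapseData

theorem IsSolution.nonempty_collapseData {DS : DeductionSystem} {S : CSystem} {σ : Subst}
    (hσ : IsSolution DS S σ) (hDS : SubtermSystem DS) (hS : IsCS S) (hf : FreePairing DS) :
    Nonempty (CollapseData DS S σ) := by
  obtain ⟨f, hf⟩ : ∃ f, IsFreePairing DS f := hf
  obtain ⟨ν, hinj, hfresh⟩ := Term.exists_fresh_nonces
    (finite_instances.subset Set.sdiff_subset : (collapsible DS S σ).Finite)
    (subT_finite ((finite_csTerms S).image (Term.subst σ)))
  exact ⟨⟨hDS, hS, hσ, f, hf, ν, hinj, hfresh⟩⟩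

/-- Corollary 1: over a subterm deduction system with a free pairing rule, a
constraint system is satisfiable iff it has a solution of size polynomial in
`|Sub(S)|` (the polynomial depending only on the deduction system). -/
theorem satisfiable_iff_small_solution (DS : DeductionSystem) (hsub : SubtermSystem DS)
    (hf : FreePairing DS) :
    ∃ p : Polynomial ℕ, ∀ S : CSystem, IsCS S →
      ((∃ σ : Subst, IsSolution DS S σ) ↔
        ∃ σ' : Subst, IsSolution DS S σ' ∧ sizeSubst σ' ≤ p.eval (csSize S)) := by
  refine ⟨.C (2 * (1 + (premiseSub DS).ncard)) * .X + 1, fun S hS => ⟨?_, ?_⟩⟩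
  · rintro ⟨σ, hσ⟩
    obtain ⟨d⟩ := hσ.nonempty_collapseData hsub hS hf
    refine ⟨d.collapsedSubst, d.isSolution_collapsedSubst, ?_⟩
    simpa using d.sizeSubst_collapsedSubst_le
  · rintro ⟨σ', hσ', -⟩
    exact ⟨σ', hσ'⟩
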